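/- For n ≥ 3, the volume of the n-dimensional hemicube hγ_n, defined as the convex hull of the 2^{n−1} points (1/2)(±1, ±1, …, ±1) with an even number of minus signs, equals 1 − 2^{n−1}/n!. -/

import Mathlib

/-!
On the cube `[-1/2, 1/2]^n` the `ℓ¹`-distance to a vertex is an affine function, and two vertices
whose sets of negative coordinates are `S` and `T` are at `ℓ¹`-distance `#(S ∆ T)`. Hence the
hemicube avoids the corner of the cube at `ℓ¹`-distance less than `1` from any odd vertex.
Conversely, let `x` be a point of the cube lying in no odd corner, and let `f` be a linear form,
with maximum over the cube attained at the vertex `T`. If `T` is odd, then `f x` falls short of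
this maximum by at least the smallest absolute value of a coefficient of `f`, which is exactly what
is lost by flipping the corresponding coordinate of `T`. So `f x` never exceeds the maximum of `f`
over the even vertices, and `x` lies in the hemicube by separation.

Thus the hemicube is the cube with its `2^(n-1)` odd corners removed. They are disjoint, since odd
vertices are at distance at least `2` from each other, and each is congruent to the simplex
`{y | 0 ≤ y, ∑ y_i < 1}`, of volume `1 / n!`.
-/

open MeasureTheory Set
open scoped Finset symmDiff Nat

section Finset

variable {α : Type*} [DecidableEq α]

lemma card_symmDiff_add_two_mul_card_inter (s t : Finset α) :
    #(s ∆ t) + 2 * #(s ∩ t) = #s + #t := by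
  have hst := Finset.card_sdiff_add_card_inter s t
  have hts := Finset.card_sdiff_add_card_inter t s
  rw [Finset.inter_comm] at hts
  rw [symmDiff_def, Finset.sup_eq_union, Finset.card_union_of_disjoint disjoint_sdiff_sdiff]
  lia

lemma even_card_symmDiff {s t : Finset α} : Even #(s ∆ t) ↔ (Even #s ↔ Even #t) := by
  rw [← Nat.even_add, ← card_symmDiff_add_two_mul_card_inter s t]
  simp [Nat.even_add]

lemma odd_card_symmDiff_singleton {s : Finset α} {a : α} : Odd #(s ∆ {a}) ↔ Even #s := by
  simp [← Nat.not_even_iff_odd, even_card_symmDiff]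

lemma even_card_symmDiff_singleton {s : Finset α} {a : α} : Even #(s ∆ {a}) ↔ Odd #s := by
  simp [← Nat.not_even_iff_odd, even_card_symmDiff]

omit [DecidableEq α] in
lemma card_filter_odd_card [Fintype α] [Nonempty α] :
    #{s : Finset α | Odd #s} = 2 ^ (Fintype.card α - 1) := by
  classical
  obtain ⟨a⟩ := ‹Nonempty α›
  have hflip : #{s : Finset α | Odd #s} = #{s : Finset α | ¬Odd #s} :=
    Finset.card_nbij' (· ∆ {a}) (· ∆ {a})
      (by simp [MapsTo, even_card_symmDiff_singleton])
      (by simp [MapsTo, odd_card_symmDiff_singleton])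
      (by simp [LeftInvOn]) (by simp [LeftInvOn])
  have htotal := Finset.card_filter_add_card_filter_not (s := .univ) fun s : Finset α ↦ Odd #s
  have hpow : 2 * 2 ^ (Fintype.card α - 1) = 2 ^ Fintype.card α :=
    mul_pow_sub_one Fintype.card_ne_zero 2
  rw [Finset.card_univ, Fintype.card_finset] at htotal
  lia

end Finset

lemma mem_convexHull_of_forall_exists_le {E : Type*} [AddCommGroup E] [Module ℝ E]
    [TopologicalSpace E] [IsTopologicalAddGroup E] [ContinuousSMul ℝ E] [LocallyConvexSpace ℝ E]
    {s : Set E} (hs : IsClosed (convexHull ℝ s)) {x : E}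
    (h : ∀ f : E →L[ℝ] ℝ, ∃ y ∈ s, f x ≤ f y) : x ∈ convexHull ℝ s := by
  by_contra hx
  obtain ⟨f, u, hlt, hu⟩ := geometric_hahn_banach_closed_point (convex_convexHull ℝ s) hs hx
  obtain ⟨y, hy, hxy⟩ := h f
  exact (hxy.trans_lt (hlt y (subset_convexHull ℝ s hy))).not_gt hu

lemma volume_convexHull_preimage_ofLp {ι : Type*} [Fintype ι] (s : Set (ι → ℝ)) :
    volume (convexHull ℝ (WithLp.ofLp ⁻¹' s : Set (EuclideanSpace ℝ ι))) =
      volume (convexHull ℝ s) := by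
  have hpreimage : convexHull ℝ (WithLp.ofLp ⁻¹' s : Set (EuclideanSpace ℝ ι)) =
      WithLp.ofLp ⁻¹' convexHull ℝ s := by
    simpa only [LinearEquiv.coe_coe, LinearEquiv.image_symm_eq_preimage, WithLp.coe_linearEquiv]
      using ((WithLp.linearEquiv 2 ℝ (ι → ℝ)).symm.toLinearMap.image_convexHull s).symm
  rw [hpreimage]
  exact (EuclideanSpace.volume_preserving_symm_measurableEquiv_toLp ι).measure_preimage_equiv _

section Simplex

lemma map_abs_volume : volume.map (fun t : ℝ ↦ |t|) = 2 • volume.restrict (Ici 0) := by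
  ext s hs
  have hnonneg : (fun t : ℝ ↦ |t|) ⁻¹' s ∩ Ici 0 = s ∩ Ici 0 := by
    ext t
    exact and_congr_left fun ht ↦ by rw [mem_preimage, abs_of_nonneg ht]
  have hneg : (fun t : ℝ ↦ |t|) ⁻¹' s \ Ici 0 = Neg.neg ⁻¹' (s ∩ Ioi 0) := by
    ext t
    simp only [mem_sdiff, mem_preimage, mem_Ici, not_le, mem_inter_iff, mem_Ioi, neg_pos]
    exact and_congr_left fun ht ↦ by rw [abs_of_neg ht]
  rw [Measure.map_apply measurable_abs hs, ← measure_inter_add_sdiff _ measurableSet_Ici, hnonneg,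
    hneg, Measure.measure_preimage_neg, measure_congr (ae_eq_rfl.inter Ioi_ae_eq_Ici),
    Measure.smul_apply, Measure.restrict_apply hs, two_smul]

variable {ι : Type*} [Fintype ι]

lemma map_pi_abs_volume :
    (volume : Measure (ι → ℝ)).map (fun x i ↦ |x i|) =
      2 ^ Fintype.card ι • volume.restrict (Ici 0) := by
  have : SigmaFinite (volume.map fun t : ℝ ↦ |t|) := by
    rw [map_abs_volume, two_smul]; infer_instance
  rw [← pi_univ_Ici, volume_pi, Measure.restrict_pi_pi,
    Measure.pi_map_pi fun _ ↦ measurable_abs.aemeasurable]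
  refine Measure.pi_eq fun s _ ↦ ?_
  simp [map_abs_volume, Measure.pi_pi, Finset.prod_mul_distrib]

variable (ι) in
/-- The simplex cut off from the orthant `x ≥ 0` by the hyperplane `∑ i, x i = 1`. The facet in
that hyperplane is left out, so that removing the simplex from a cube leaves a closed set. -/
def cornerSimplex : Set (ι → ℝ) := {x | 0 ≤ x ∧ ∑ i, x i < 1}

lemma measurableSet_cornerSimplex : MeasurableSet (cornerSimplex ι) :=
  measurableSet_Ici.inter <|
    measurableSet_lt (Finset.measurable_fun_sum _ fun i _ ↦ measurable_pi_apply i) measurable_const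

lemma volume_sum_abs_lt_one :
    volume {x : ι → ℝ | ∑ i, |x i| < 1} =
      ENNReal.ofReal (2 ^ Fintype.card ι / (Fintype.card ι)!) := by
  have h := volume_sum_rpow_lt_one ι (p := 1) le_rfl
  simpa [one_add_one_eq_two, Real.Gamma_nat_eq_factorial] using h

lemma volume_cornerSimplex : volume (cornerSimplex ι) = ENNReal.ofReal (1 / (Fintype.card ι)!) := by
  have hpreimage : (fun (x : ι → ℝ) i ↦ |x i|) ⁻¹' cornerSimplex ι = {x | ∑ i, |x i| < 1} := by
    ext x
    exact and_iff_right fun i ↦ abs_nonneg (x i)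
  have hfold : volume {x : ι → ℝ | ∑ i, |x i| < 1} =
      2 ^ Fintype.card ι * volume (cornerSimplex ι) := by
    have hsubset : cornerSimplex ι ⊆ Ici 0 := fun _ hx ↦ hx.1
    rw [← hpreimage, ← Measure.map_apply (by fun_prop) measurableSet_cornerSimplex,
      map_pi_abs_volume, Measure.smul_apply, Measure.restrict_apply measurableSet_cornerSimplex,
      inter_eq_self_of_subset_left hsubset]
    simp
  rw [volume_sum_abs_lt_one, div_eq_mul_one_div, ENNReal.ofReal_mul (by positivity),
    ENNReal.ofReal_pow zero_le_two, ENNReal.ofReal_ofNat] at hfold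
  exact ((ENNReal.mul_right_inj (by simp) (by simp)).1 hfold).symm

end Simplex

section Cube

variable {ι : Type*} {x : ι → ℝ}

variable (ι) in
/-- The cube `[-1/2, 1/2]^ι`, of which the hemicube keeps every other vertex. -/
def centeredCube : Set (ι → ℝ) := univ.pi fun _ ↦ Icc (-(1 / 2)) (1 / 2)

lemma mem_centeredCube : x ∈ centeredCube ι ↔ ∀ i, |x i| ≤ 1 / 2 := by
  simp only [centeredCube, mem_univ_pi, mem_Icc, abs_le]

lemma convex_centeredCube : Convex ℝ (centeredCube ι) :=
  convex_pi fun _ _ ↦ convex_Icc _ _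

lemma volume_centeredCube [Fintype ι] : volume (centeredCube ι) = 1 := by
  rw [centeredCube, volume_pi_pi]
  norm_num

variable [DecidableEq ι] {S T : Finset ι}

/-- The vertex of the cube `[-1/2, 1/2]^ι` whose negative coordinates are those in `S`. -/
noncomputable def cubeVertex (S : Finset ι) (i : ι) : ℝ := if i ∈ S then -(1 / 2) else 1 / 2

lemma cubeVertex_eq_or (S : Finset ι) (i : ι) :
    cubeVertex S i = 1 / 2 ∨ cubeVertex S i = -(1 / 2) := by
  unfold cubeVertex; split_ifs <;> simp

lemma cubeVertex_eq_neg_half {i : ι} : cubeVertex S i = -(1 / 2) ↔ i ∈ S := by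
  unfold cubeVertex; split_ifs with h <;> norm_num [h]

lemma abs_cubeVertex_sub_cubeVertex (S T : Finset ι) (i : ι) :
    |cubeVertex S i - cubeVertex T i| = if i ∈ S ∆ T then 1 else 0 := by
  by_cases hS : i ∈ S <;> by_cases hT : i ∈ T <;>
    norm_num [cubeVertex, Finset.mem_symmDiff, hS, hT]

lemma image_cubeVertex_even [Finite ι] :
    cubeVertex '' {S : Finset ι | Even #S} =
      {x | (∀ i, x i = 1 / 2 ∨ x i = -(1 / 2)) ∧ Even {i | x i = -(1 / 2)}.ncard} := by
  ext x
  constructor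
  · rintro ⟨S, hS, rfl⟩
    refine ⟨cubeVertex_eq_or S, ?_⟩
    have hneg : {i | cubeVertex S i = -(1 / 2)} = S := by
      ext i
      exact cubeVertex_eq_neg_half
    rwa [hneg, ncard_coe_finset]
  · rintro ⟨hx, heven⟩
    cases nonempty_fintype ι
    refine ⟨({i | x i = -(1 / 2)} : Finset ι), ?_, ?_⟩
    · rw [mem_ofPred_eq, ← ncard_coe_finset]
      simpa using heven
    · ext i
      rcases hx i with h | h <;> norm_num [cubeVertex, h]

lemma cubeVertex_mem_centeredCube (S : Finset ι) : cubeVertex S ∈ centeredCube ι := by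
  refine mem_centeredCube.2 fun i ↦ ?_
  rcases cubeVertex_eq_or S i with h | h <;> norm_num [h, abs_of_pos]

/-- The symmetry of the cube `[-1/2, 1/2]^ι` carrying its vertex `cubeVertex S` to
`cubeVertex univ`, followed by the translation carrying that vertex to `0`. Note that
`2 * cubeVertex S i` is the sign `±1`. -/
noncomputable def cubeReflection (S : Finset ι) (x : ι → ℝ) (i : ι) : ℝ :=
  1 / 2 - 2 * cubeVertex S i * x i

lemma abs_cubeReflection (S : Finset ι) (x : ι → ℝ) (i : ι) :
    |cubeReflection S x i| = |x i - cubeVertex S i| := by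
  rcases cubeVertex_eq_or S i with h | h
  · rw [cubeReflection, h, abs_sub_comm]; ring_nf
  · rw [cubeReflection, h]; ring_nf

lemma cubeReflection_nonneg (hx : x ∈ centeredCube ι) (S : Finset ι) : 0 ≤ cubeReflection S x := by
  intro i
  obtain ⟨hlow, hupp⟩ := hx i trivial
  rcases cubeVertex_eq_or S i with h | h <;>
    simp only [Pi.zero_apply, cubeReflection, h] <;> linarith

lemma abs_sub_cubeVertex (hx : x ∈ centeredCube ι) (S : Finset ι) (i : ι) :
    |x i - cubeVertex S i| = cubeReflection S x i := by
  rw [← abs_cubeReflection, abs_of_nonneg (cubeReflection_nonneg hx S i)]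

variable [Fintype ι]

lemma measurePreserving_cubeReflection (S : Finset ι) : MeasurePreserving (cubeReflection S) := by
  refine volume_preserving_pi (f := fun i t ↦ 1 / 2 - 2 * cubeVertex S i * t) fun i ↦ ?_
  rcases cubeVertex_eq_or S i with h | h
  · simpa [h] using Measure.measurePreserving_sub_left volume (1 / 2 : ℝ)
  · simpa [h] using measurePreserving_add_left volume (1 / 2 : ℝ)

lemma sum_abs_cubeVertex_sub_cubeVertex (S T : Finset ι) :
    ∑ i, |cubeVertex S i - cubeVertex T i| = #(S ∆ T) := by
  simp [abs_cubeVertex_sub_cubeVertex]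

lemma sum_abs_sub_cubeVertex (hx : x ∈ centeredCube ι) (S : Finset ι) :
    ∑ i, |x i - cubeVertex S i| = Fintype.card ι / 2 - 2 * (cubeVertex S ⬝ᵥ x) := by
  simp only [abs_sub_cubeVertex hx, cubeReflection, Finset.sum_sub_distrib, Finset.sum_const,
    Finset.card_univ, nsmul_eq_mul, dotProduct, Finset.mul_sum, mul_assoc]
  ring

/-- The linear form `c` attains its maximum over the cube at the vertex `{i | c i < 0}`; the sum is
the amount by which its value at `x` falls short of this maximum. -/
lemma dotProduct_add_sum_abs_mul_abs_sub_cubeVertex (hx : x ∈ centeredCube ι) (c : ι → ℝ) :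
    c ⬝ᵥ x + ∑ i, |c i| * |x i - cubeVertex {i | c i < 0} i| = c ⬝ᵥ cubeVertex {i | c i < 0} := by
  rw [dotProduct, dotProduct, ← Finset.sum_add_distrib]
  refine Finset.sum_congr rfl fun i _ ↦ ?_
  rw [abs_sub_cubeVertex hx, cubeReflection]
  by_cases hc : c i < 0
  · simp only [cubeVertex, Finset.mem_filter_univ, hc, if_true, abs_of_neg hc]
    ring
  · simp only [cubeVertex, Finset.mem_filter_univ, hc, if_false, abs_of_nonneg (not_lt.1 hc)]
    ring

/-- The corner of the cube `[-1/2, 1/2]^ι` at `cubeVertex S`: the points of the cube at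
`ℓ¹`-distance less than `1` from that vertex. The inequality is strict, so that the hemicube is
exactly the complement in the cube of the corners at the odd vertices. -/
def cubeCorner (S : Finset ι) : Set (ι → ℝ) :=
  {x | x ∈ centeredCube ι ∧ ∑ i, |x i - cubeVertex S i| < 1}

lemma cubeCorner_eq_preimage (S : Finset ι) :
    cubeCorner S = cubeReflection S ⁻¹' cornerSimplex ι := by
  ext x
  constructor
  · rintro ⟨hx, hlt⟩
    exact ⟨cubeReflection_nonneg hx S, by simpa only [abs_sub_cubeVertex hx] using hlt⟩
  · rintro ⟨hnonneg, hlt⟩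
    have hx : x ∈ centeredCube ι := by
      intro i _
      have hle := Finset.single_le_sum (fun j _ ↦ hnonneg j) (Finset.mem_univ i)
      have hi := hnonneg i
      rcases cubeVertex_eq_or S i with h | h <;>
        simp only [Pi.zero_apply, cubeReflection, h] at hle hi hlt <;>
        constructor <;> linarith
    exact ⟨hx, by simpa only [abs_sub_cubeVertex hx] using hlt⟩

lemma measurableSet_cubeCorner (S : Finset ι) : MeasurableSet (cubeCorner S) := by
  rw [cubeCorner_eq_preimage]
  exact (measurePreserving_cubeReflection S).measurable measurableSet_cornerSimplex

lemma volume_cubeCorner (S : Finset ι) :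
    volume (cubeCorner S) = ENNReal.ofReal (1 / (Fintype.card ι)!) := by
  rw [cubeCorner_eq_preimage, (measurePreserving_cubeReflection S).measure_preimage
    measurableSet_cornerSimplex.nullMeasurableSet, volume_cornerSimplex]

lemma disjoint_cubeCorner (h : 2 ≤ #(S ∆ T)) : Disjoint (cubeCorner S) (cubeCorner T) := by
  rw [Set.disjoint_left]
  rintro x ⟨-, hS⟩ ⟨-, hT⟩
  have htriangle : (#(S ∆ T) : ℝ) ≤ ∑ i, |x i - cubeVertex S i| + ∑ i, |x i - cubeVertex T i| := by
    rw [← sum_abs_cubeVertex_sub_cubeVertex, ← Finset.sum_add_distrib]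
    refine Finset.sum_le_sum fun i _ ↦ ?_
    rw [abs_sub_comm (x i) (cubeVertex S i)]
    exact abs_sub_le _ _ _
  have hcard : (2 : ℝ) ≤ #(S ∆ T) := by exact_mod_cast h
  linarith

lemma pairwiseDisjoint_cubeCorner_odd :
    {S : Finset ι | Odd #S}.PairwiseDisjoint cubeCorner := by
  intro S hS T hT hne
  have heven : Even #(S ∆ T) := by
    simp [even_card_symmDiff, Nat.not_even_iff_odd.2 hS, Nat.not_even_iff_odd.2 hT]
  have hpos : 0 < #(S ∆ T) := Finset.card_pos.2 (Finset.symmDiff_nonempty.2 hne)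
  exact disjoint_cubeCorner (Nat.le_of_dvd hpos heven.two_dvd)

end Cube

section Hemicube

variable {ι : Type*} [DecidableEq ι] {x : ι → ℝ}

variable (ι) in
/-- The hemicube with coordinates indexed by `ι`: the convex hull of the vertices of the cube
`[-1/2, 1/2]^ι` with an even number of negative coordinates. -/
def hemicube : Set (ι → ℝ) := convexHull ℝ (cubeVertex '' {S : Finset ι | Even #S})

lemma hemicube_subset_centeredCube : hemicube ι ⊆ centeredCube ι :=
  convexHull_min (image_subset_iff.2 fun S _ ↦ cubeVertex_mem_centeredCube S) convex_centeredCube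

variable [Fintype ι]

lemma one_le_sum_abs_sub_cubeVertex {S : Finset ι} (hx : x ∈ hemicube ι) (hS : Odd #S) :
    1 ≤ ∑ i, |x i - cubeVertex S i| := by
  have hsubset : hemicube ι ⊆ {y | cubeVertex S ⬝ᵥ y ≤ (Fintype.card ι / 2 - 1) / 2} := by
    refine convexHull_min ?_ (convex_halfSpace_le (dotProductBilin ℝ ℝ (cubeVertex S)).isLinear _)
    rintro _ ⟨T, hT, rfl⟩
    have hne : T ≠ S := by
      rintro rfl
      exact Nat.not_even_iff_odd.2 hS hT
    have hcard : (1 : ℝ) ≤ #(T ∆ S) := by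
      exact_mod_cast Finset.card_pos.2 (Finset.symmDiff_nonempty.2 hne)
    have hdist := sum_abs_sub_cubeVertex (cubeVertex_mem_centeredCube T) S
    rw [sum_abs_cubeVertex_sub_cubeVertex] at hdist
    rw [mem_ofPred_eq]
    linarith
  have hle := hsubset hx
  rw [mem_ofPred_eq] at hle
  rw [sum_abs_sub_cubeVertex (hemicube_subset_centeredCube hx)]
  linarith

lemma dotProduct_cubeVertex_symmDiff_singleton (c : ι → ℝ) (j : ι) :
    c ⬝ᵥ cubeVertex (({i | c i < 0} : Finset ι) ∆ {j}) =
      c ⬝ᵥ cubeVertex {i | c i < 0} - |c j| := by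
  rw [← dotProduct_add_sum_abs_mul_abs_sub_cubeVertex
    (cubeVertex_mem_centeredCube (({i | c i < 0} : Finset ι) ∆ {j})) c]
  simp [abs_cubeVertex_sub_cubeVertex]

lemma exists_even_dotProduct_le (hx : x ∈ centeredCube ι)
    (hodd : ∀ S : Finset ι, Odd #S → 1 ≤ ∑ i, |x i - cubeVertex S i|) (c : ι → ℝ) :
    ∃ S : Finset ι, Even #S ∧ c ⬝ᵥ x ≤ c ⬝ᵥ cubeVertex S := by
  have hloss := dotProduct_add_sum_abs_mul_abs_sub_cubeVertex hx c
  set T : Finset ι := {i | c i < 0}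
  rcases Nat.even_or_odd #T with hT | hT
  · refine ⟨T, hT, ?_⟩
    have hnonneg : 0 ≤ ∑ i, |c i| * |x i - cubeVertex T i| := by positivity
    linarith
  · have : Nonempty ι := (Finset.card_pos.1 hT.pos).to_type
    obtain ⟨j, hj⟩ := Finite.exists_min fun i ↦ |c i|
    refine ⟨T ∆ {j}, even_card_symmDiff_singleton.2 hT, ?_⟩
    have hmin : |c j| ≤ ∑ i, |c i| * |x i - cubeVertex T i| := calc
      |c j| ≤ |c j| * ∑ i, |x i - cubeVertex T i| :=
        le_mul_of_one_le_right (abs_nonneg _) (hodd T hT)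
      _ ≤ ∑ i, |c i| * |x i - cubeVertex T i| := by
        rw [Finset.mul_sum]
        exact Finset.sum_le_sum fun i _ ↦ mul_le_mul_of_nonneg_right (hj i) (abs_nonneg _)
    rw [dotProduct_cubeVertex_symmDiff_singleton]
    linarith

lemma mem_hemicube :
    x ∈ hemicube ι ↔
      x ∈ centeredCube ι ∧ ∀ S : Finset ι, Odd #S → 1 ≤ ∑ i, |x i - cubeVertex S i| := by
  refine ⟨fun hx ↦ ⟨hemicube_subset_centeredCube hx, fun S ↦ one_le_sum_abs_sub_cubeVertex hx⟩, ?_⟩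
  rintro ⟨hx, hodd⟩
  refine mem_convexHull_of_forall_exists_le ((toFinite _).isClosed_convexHull ℝ) fun f ↦ ?_
  obtain ⟨c, hc⟩ := (dotProductEquiv ℝ ι).surjective f
  have hf (y : ι → ℝ) : f y = c ⬝ᵥ y := (LinearMap.congr_fun hc y).symm
  obtain ⟨S, hS, hle⟩ := exists_even_dotProduct_le hx hodd c
  exact ⟨cubeVertex S, mem_image_of_mem _ hS, by rwa [hf, hf]⟩

lemma hemicube_eq_sdiff_biUnion_cubeCorner :
    hemicube ι = centeredCube ι \ ⋃ S ∈ ({S | Odd #S} : Finset (Finset ι)), cubeCorner S := by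
  ext x
  simp only [mem_hemicube, mem_sdiff, mem_iUnion₂, not_exists, cubeCorner, mem_ofPred_eq, not_and,
    not_lt, Finset.mem_filter_univ]
  exact and_congr_right fun hx ↦ forall₂_congr fun S _ ↦ (imp_iff_right hx).symm

lemma volume_biUnion_odd_cubeCorner [Nonempty ι] :
    volume (⋃ S ∈ ({S | Odd #S} : Finset (Finset ι)), cubeCorner S) =
      ENNReal.ofReal (2 ^ (Fintype.card ι - 1) / (Fintype.card ι)!) := by
  rw [measure_biUnion_finset (by simpa using pairwiseDisjoint_cubeCorner_odd)
    fun S _ ↦ measurableSet_cubeCorner S]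
  simp only [volume_cubeCorner, Finset.sum_const, card_filter_odd_card]
  rw [← ENNReal.ofReal_nsmul, nsmul_eq_mul, mul_one_div, Nat.cast_pow, Nat.cast_ofNat]

theorem volume_hemicube_pi [Nonempty ι] :
    volume (hemicube ι) =
      ENNReal.ofReal (1 - 2 ^ (Fintype.card ι - 1) / (Fintype.card ι)!) := by
  have hsubset : ⋃ S ∈ ({S | Odd #S} : Finset (Finset ι)), cubeCorner S ⊆ centeredCube ι :=
    iUnion₂_subset fun S _ _ hx ↦ hx.1
  have hmeas : MeasurableSet (⋃ S ∈ ({S | Odd #S} : Finset (Finset ι)), cubeCorner S) :=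
    Finset.measurableSet_biUnion _ fun S _ ↦ measurableSet_cubeCorner S
  have hfinite : volume (⋃ S ∈ ({S | Odd #S} : Finset (Finset ι)), cubeCorner S) ≠ ⊤ := by
    rw [volume_biUnion_odd_cubeCorner]
    exact ENNReal.ofReal_ne_top
  rw [hemicube_eq_sdiff_biUnion_cubeCorner, measure_sdiff hsubset hmeas.nullMeasurableSet hfinite,
    volume_centeredCube, volume_biUnion_odd_cubeCorner, ENNReal.ofReal_sub _ (by positivity),
    ENNReal.ofReal_one]

end Hemicube

theorem volume_hemicube_general (ι : Type*) [Fintype ι] [Nonempty ι] :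
    volume (convexHull ℝ {x : EuclideanSpace ℝ ι |
      (∀ i, x i = 1 / 2 ∨ x i = -(1 / 2)) ∧ Even {i | x i = -(1 / 2)}.ncard}) =
    ENNReal.ofReal (1 - 2 ^ (Fintype.card ι - 1) / (Fintype.card ι)!) := by
  classical
  rw [← volume_hemicube_pi, hemicube, image_cubeVertex_even,
    ← volume_convexHull_preimage_ofLp, preimage_ofPred_eq]

/-- For `n ≥ 3`, the volume of the hemicube `hγ_n`, the convex hull of the points
`(±1/2, …, ±1/2)` with an even number of minus signs, equals `1 - 2^(n-1)/n!`. -/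
theorem volume_hemicube (n : ℕ) (hn : 3 ≤ n) :
    MeasureTheory.volume (convexHull ℝ
      {x : EuclideanSpace ℝ (Fin n) |
        (∀ i, x i = 1 / 2 ∨ x i = -(1 / 2)) ∧
        Even ({i : Fin n | x i = -(1 / 2)}.ncard)})
    = ENNReal.ofReal (1 - (2 : ℝ) ^ (n - 1) / (n.factorial : ℝ)) := by
  have : Nonempty (Fin n) := ⟨0, by lia⟩
  simpa only [Fintype.card_fin] using volume_hemicube_general (Fin n)
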